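/- arXiv:1904.06942 — 2 statements merged into one kernel-verified Lean document; each statement's English description precedes it below -/
import Mathlib

section
/- For every MSO sentence φ over Σ-labeled undirected graphs, there exists an MSO sentence φ~ over binary trees labeled by Σ ∪ {⊕,⊗} such that for every cograph term C, denoting G = ⟦C⟧: G ⊨ φ if and only if C ⊨ φ~. -/
/-! ### Monadic second-order logic over vertex- and edge-labeled structures -/

/-- MSO formulas over structures with vertex labels `Vl` and binary relations
indexed by `El`.  First-order variables and set variables are indexed by `ℕ`. -/
inductive GMSO (Vl El : Type) : Type
  | lab (a : Vl) (x : ℕ)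
  | edge (γ : El) (x y : ℕ)
  | eq (x y : ℕ)
  | mem (x X : ℕ)
  | or (φ ψ : GMSO Vl El)
  | not (φ : GMSO Vl El)
  | exFO (x : ℕ) (φ : GMSO Vl El)
  | exSO (X : ℕ) (φ : GMSO Vl El)

namespace GMSO

variable {Vl El : Type} {V : Type}

/-- Satisfaction of an MSO formula in a structure with domain `dom`, labeling
relation `lab` and edge relations `edge`, under valuations `ν` (first-order,
partial) and `μ` (second-order). -/
def Sat (dom : Set V) (lab : V → Vl → Prop) (edge : El → V → V → Prop) :
    (ℕ → Option V) → (ℕ → Set V) → GMSO Vl El → Prop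
  | ν, _, .lab a x => ∃ v, ν x = some v ∧ v ∈ dom ∧ lab v a
  | ν, _, .edge γ x y => ∃ u v, ν x = some u ∧ ν y = some v ∧ edge γ u v
  | ν, _, .eq x y => ∃ v, ν x = some v ∧ ν y = some v
  | ν, μ, .mem x X => ∃ v, ν x = some v ∧ v ∈ μ X
  | ν, μ, .or φ ψ => Sat dom lab edge ν μ φ ∨ Sat dom lab edge ν μ ψ
  | ν, μ, .not φ => ¬ Sat dom lab edge ν μ φ
  | ν, μ, .exFO x φ => ∃ v ∈ dom, Sat dom lab edge (Function.update ν x (some v)) μ φ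
  | ν, μ, .exSO X φ => ∃ E : Set V, E ⊆ dom ∧ Sat dom lab edge ν (Function.update μ X E) φ

/-- Free first-order variables. -/
def freeFO : GMSO Vl El → Set ℕ
  | .lab _ x => {x}
  | .edge _ x y => {x, y}
  | .eq x y => {x, y}
  | .mem x _ => {x}
  | .or φ ψ => freeFO φ ∪ freeFO ψ
  | .not φ => freeFO φ
  | .exFO x φ => freeFO φ \ {x}
  | .exSO _ φ => freeFO φ

/-- Free second-order variables. -/
def freeSO : GMSO Vl El → Set ℕ
  | .lab _ _ => ∅
  | .edge _ _ _ => ∅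
  | .eq _ _ => ∅
  | .mem _ X => {X}
  | .or φ ψ => freeSO φ ∪ freeSO ψ
  | .not φ => freeSO φ
  | .exFO _ φ => freeSO φ
  | .exSO X φ => freeSO φ \ {X}

/-- A sentence is a formula without free variables. -/
def Closed (φ : GMSO Vl El) : Prop := freeFO φ = ∅ ∧ freeSO φ = ∅

/-- Satisfaction of a sentence (valuations are irrelevant for sentences). -/
def Models (dom : Set V) (lab : V → Vl → Prop) (edge : El → V → V → Prop)
    (φ : GMSO Vl El) : Prop :=
  Sat dom lab edge (fun _ => none) (fun _ => ∅) φ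

/-- First-order formulas: no second-order quantification. -/
def FirstOrder : GMSO Vl El → Prop
  | .or φ ψ => FirstOrder φ ∧ FirstOrder ψ
  | .not φ => FirstOrder φ
  | .exFO _ φ => FirstOrder φ
  | .exSO _ _ => False
  | _ => True

/-- EMSO formulas: a block of existential second-order quantifiers followed by a
first-order formula. -/
inductive IsEMSO : GMSO Vl El → Prop
  | fo {φ : GMSO Vl El} : FirstOrder φ → IsEMSO φ
  | ex {X : ℕ} {φ : GMSO Vl El} : IsEMSO φ → IsEMSO (.exSO X φ)

end GMSO
/-! ### Labeled binary trees (with unary nodes) and MSO over them -/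

/-- Λ-labeled trees in which every node has 0, 1, or 2 children. -/
inductive BTree (Λ : Type) : Type
  | leaf (l : Λ)
  | unary (l : Λ) (t : BTree Λ)
  | binary (l : Λ) (t₁ t₂ : BTree Λ)

namespace BTree

variable {Λ : Type}

/-- The label at a position (a path from the root; `false` = child 0,
`true` = child 1), if the position exists. -/
def labelAt : BTree Λ → List Bool → Option Λ
  | .leaf l, [] => some l
  | .unary l _, [] => some l
  | .binary l _ _, [] => some l
  | .unary _ t, false :: p => t.labelAt p
  | .binary _ t₁ _, false :: p => t₁.labelAt p
  | .binary _ _ t₂, true :: p => t₂.labelAt p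
  | _, _ => none

/-- The set of node positions of a tree. -/
def positions (t : BTree Λ) : Set (List Bool) := {p | (t.labelAt p).isSome}

/-- The `b`-child relation (`b = false`: child 0, `b = true`: child 1). -/
def childRel (t : BTree Λ) (b : Bool) (p q : List Bool) : Prop :=
  q = p ++ [b] ∧ q ∈ t.positions

/-- Satisfaction of an MSO sentence over the tree (atoms: labels, `↓0`, `↓1`). -/
def TSat (t : BTree Λ) (φ : GMSO Λ Bool) : Prop :=
  GMSO.Models t.positions (fun p l => t.labelAt p = some l) t.childRel φ

end BTree
/-! ### Cograph terms and their graph semantics -/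

/-- The label alphabet of cograph terms: letters of the alphabet, `⊕`
(`Sum.inr false`) and `⊗` (`Sum.inr true`). -/
abbrev CographLabel (Alph : Type) : Type := Alph ⊕ Bool

/-- A binary tree is a cograph term iff every leaf carries a letter and every
non-leaf node is binary and carries `⊕` or `⊗`. -/
def IsCographTerm {Alph : Type} : BTree (CographLabel Alph) → Prop
  | .leaf (Sum.inl _) => True
  | .binary (Sum.inr _) t₁ t₂ => IsCographTerm t₁ ∧ IsCographTerm t₂
  | _ => False

/-- The vertices of the cograph `⟦C⟧`: the (letter-labeled) leaf positions. -/
def cographVertices {Alph : Type} (t : BTree (CographLabel Alph)) : Set (List Bool) :=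
  {p | ∃ a : Alph, t.labelAt p = some (Sum.inl a)}

/-- The edges of the cograph `⟦C⟧`, defined compositionally: `⊕` is disjoint
union and `⊗` is the complete join. -/
def cographEdge {Alph : Type} :
    BTree (CographLabel Alph) → List Bool → List Bool → Prop
  | .binary l t₁ t₂, u, v =>
      (∃ u' v', u = false :: u' ∧ v = false :: v' ∧ cographEdge t₁ u' v') ∨
      (∃ u' v', u = true :: u' ∧ v = true :: v' ∧ cographEdge t₂ u' v') ∨
      (l = Sum.inr true ∧
        ((∃ u' v', u = false :: u' ∧ v = true :: v' ∧
            u' ∈ cographVertices t₁ ∧ v' ∈ cographVertices t₂) ∨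
         (∃ u' v', u = true :: u' ∧ v = false :: v' ∧
            u' ∈ cographVertices t₂ ∧ v' ∈ cographVertices t₁)))
  | _, _, _ => False

/-- Satisfaction of a graph-MSO sentence (single, undirected edge relation) in
the cograph `⟦C⟧` denoted by the term `C = t`. -/
def cographSat {Alph : Type} (t : BTree (CographLabel Alph))
    (φ : GMSO Alph Unit) : Prop :=
  GMSO.Models (cographVertices t) (fun p a => t.labelAt p = some (Sum.inl a))
    (fun _ u v => cographEdge t u v) φ

/-!
The cograph `⟦C⟧` is MSO-interpretable in the tree `C`. Its vertices are the nodes labeled neither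
`⊕` nor `⊗`, and two vertices are adjacent iff they lie below different children of a node labeled
`⊗`, that is, iff their lowest common ancestor is a `⊗`. The tree order is MSO-definable from the
child relations: `q` is below `p` iff `q` belongs to every set of nodes that contains `p` and is
closed under taking children. A formula over the interpreted structure is then pulled back by
replacing its atoms with the defining formulas and relativizing its quantifiers to the vertices.
-/

namespace GMSO

variable {Vl El : Type}

/-- Conjunction, expressed by `or` and `not`. -/
def and (φ ψ : GMSO Vl El) : GMSO Vl El := .not (.or (.not φ) (.not ψ))

/-- Implication, expressed by `or` and `not`. -/
def imp (φ ψ : GMSO Vl El) : GMSO Vl El := .or (.not φ) ψ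

/-- First-order universal quantification. -/
def allFO (x : ℕ) (φ : GMSO Vl El) : GMSO Vl El := .not (.exFO x (.not φ))

/-- Universal quantification over sets. -/
def allSO (X : ℕ) (φ : GMSO Vl El) : GMSO Vl El := .not (.exSO X (.not φ))

variable (φ ψ : GMSO Vl El) (x X : ℕ)

theorem freeFO_and : (φ.and ψ).freeFO = φ.freeFO ∪ ψ.freeFO := rfl

theorem freeSO_and : (φ.and ψ).freeSO = φ.freeSO ∪ ψ.freeSO := rfl

theorem freeFO_imp : (φ.imp ψ).freeFO = φ.freeFO ∪ ψ.freeFO := rfl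

theorem freeSO_imp : (φ.imp ψ).freeSO = φ.freeSO ∪ ψ.freeSO := rfl

theorem freeFO_allFO : (φ.allFO x).freeFO = φ.freeFO \ {x} := rfl

theorem freeSO_allFO : (φ.allFO x).freeSO = φ.freeSO := rfl

theorem freeFO_allSO : (φ.allSO X).freeFO = φ.freeFO := rfl

theorem freeSO_allSO : (φ.allSO X).freeSO = φ.freeSO \ {X} := rfl

end GMSO

/-- A structure for the formulas `GMSO Vl El`, with domain `dom`, bundling the semantic arguments
of `GMSO.Sat`. -/
structure LabeledGraph (Vl El V : Type) where
  dom : Set V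
  lab : V → Vl → Prop
  edge : El → V → V → Prop

namespace LabeledGraph

variable {Vl El V : Type}

/-- Satisfaction of a formula in a bundled structure. -/
def Sat (M : LabeledGraph Vl El V) (ν : ℕ → Option V) (μ : ℕ → Set V) (φ : GMSO Vl El) : Prop :=
  GMSO.Sat M.dom M.lab M.edge ν μ φ

section Sat

variable {M : LabeledGraph Vl El V} {ν : ℕ → Option V} {μ : ℕ → Set V} {φ ψ : GMSO Vl El}
  {x y X : ℕ} {u v : V}

theorem sat_lab_iff {a : Vl} (hx : ν x = some u) :
    M.Sat ν μ (.lab a x) ↔ u ∈ M.dom ∧ M.lab u a := by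
  simp [Sat, GMSO.Sat, hx]

theorem sat_edge_iff {γ : El} (hx : ν x = some u) (hy : ν y = some v) :
    M.Sat ν μ (.edge γ x y) ↔ M.edge γ u v := by
  simp [Sat, GMSO.Sat, hx, hy]

theorem sat_mem_iff (hx : ν x = some u) : M.Sat ν μ (.mem x X) ↔ u ∈ μ X := by
  simp [Sat, GMSO.Sat, hx]

theorem sat_or : M.Sat ν μ (φ.or ψ) ↔ M.Sat ν μ φ ∨ M.Sat ν μ ψ := Iff.rfl

theorem sat_not : M.Sat ν μ φ.not ↔ ¬ M.Sat ν μ φ := Iff.rfl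

theorem sat_exFO : M.Sat ν μ (φ.exFO x) ↔
    ∃ v ∈ M.dom, M.Sat (Function.update ν x (some v)) μ φ := Iff.rfl

theorem sat_exSO : M.Sat ν μ (φ.exSO X) ↔
    ∃ E ⊆ M.dom, M.Sat ν (Function.update μ X E) φ := Iff.rfl

theorem sat_and : M.Sat ν μ (φ.and ψ) ↔ M.Sat ν μ φ ∧ M.Sat ν μ ψ := by
  simp only [GMSO.and, sat_or, sat_not, not_or, not_not]

theorem sat_imp : M.Sat ν μ (φ.imp ψ) ↔ (M.Sat ν μ φ → M.Sat ν μ ψ) := by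
  simp only [GMSO.imp, sat_or, sat_not, imp_iff_not_or]

theorem sat_allFO : M.Sat ν μ (φ.allFO x) ↔
    ∀ v ∈ M.dom, M.Sat (Function.update ν x (some v)) μ φ := by
  simp only [GMSO.allFO, sat_exFO, sat_not, not_exists, not_and, not_not]

theorem sat_allSO : M.Sat ν μ (φ.allSO X) ↔
    ∀ E ⊆ M.dom, M.Sat ν (Function.update μ X E) φ := by
  simp only [GMSO.allSO, sat_exSO, sat_not, not_exists, not_and, not_not]

end Sat

/-- The formulas `α x`, uniform in the name `x` of their free variable, define `S` among the
elements of `D`. -/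
def DefinesSetOn (M : LabeledGraph Vl El V) (D : Set V) (α : ℕ → GMSO Vl El) (S : Set V) : Prop :=
  ∀ ⦃ν μ x u⦄, u ∈ D → ν x = some u → (M.Sat ν μ (α x) ↔ u ∈ S)

/-- The formulas `β x y`, uniform in the names `x` and `y` of their free variables, define `R` among
the elements of `D`. -/
def DefinesRelOn (M : LabeledGraph Vl El V) (D : Set V) (β : ℕ → ℕ → GMSO Vl El)
    (R : V → V → Prop) : Prop :=
  ∀ ⦃ν μ x y u v⦄, u ∈ D → v ∈ D → ν x = some u → ν y = some v → (M.Sat ν μ (β x y) ↔ R u v)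

end LabeledGraph

/-- The syntax of a one-dimensional MSO interpretation of structures over `(Vl, El)` in structures
over `(Vl', El')`: formulas, uniform in the names of their free variables, for the domain, the
labels and the edges of the interpreted structure. -/
structure MSOInterpretation (Vl El Vl' El' : Type) where
  domain : ℕ → GMSO Vl' El'
  lab : Vl → ℕ → GMSO Vl' El'
  edge : El → ℕ → ℕ → GMSO Vl' El'
  freeFO_domain : ∀ x, (domain x).freeFO ⊆ {x}
  freeSO_domain : ∀ x, (domain x).freeSO = ∅
  freeFO_lab : ∀ a x, (lab a x).freeFO ⊆ {x}
  freeSO_lab : ∀ a x, (lab a x).freeSO = ∅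
  freeFO_edge : ∀ γ x y, (edge γ x y).freeFO ⊆ {x, y}
  freeSO_edge : ∀ γ x y, (edge γ x y).freeSO = ∅

namespace MSOInterpretation

open GMSO LabeledGraph

variable {Vl El Vl' El' V : Type} (I : MSOInterpretation Vl El Vl' El')

/-- The pullback of a formula along an interpretation: atoms are replaced by their defining formulas
and quantifiers are relativized to the defined domain. -/
def translate : GMSO Vl El → GMSO Vl' El'
  | .lab a x => I.lab a x
  | .edge γ x y => I.edge γ x y
  | .eq x y => .eq x y
  | .mem x X => .mem x X
  | .or φ ψ => .or (translate φ) (translate ψ)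
  | .not φ => .not (translate φ)
  | .exFO x φ => .exFO x ((I.domain x).and (translate φ))
  | .exSO X φ => .exSO X ((allFO 0 ((GMSO.mem 0 X).imp (I.domain 0))).and (translate φ))

theorem freeFO_translate_subset (φ : GMSO Vl El) : (I.translate φ).freeFO ⊆ φ.freeFO := by
  induction φ with
  | lab a x => exact I.freeFO_lab a x
  | edge γ x y => exact I.freeFO_edge γ x y
  | eq x y => exact subset_rfl
  | mem x X => exact subset_rfl
  | or _ _ ihφ ihψ => exact Set.union_subset_union ihφ ihψ
  | not _ ih => exact ih
  | exFO x _ ih =>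
    simp only [translate, freeFO, freeFO_and, Set.union_sdiff_distrib]
    have guard_closed : (I.domain x).freeFO \ {x} = ∅ := Set.sdiff_eq_empty.2 (I.freeFO_domain x)
    rw [guard_closed, Set.empty_union]
    exact Set.sdiff_subset_sdiff_left ih
  | exSO X _ ih =>
    simp only [translate, freeFO, freeFO_and, freeFO_allFO, freeFO_imp, Set.union_sdiff_distrib,
      Set.sdiff_self, Set.empty_union]
    exact Set.union_subset
      ((Set.sdiff_eq_empty.2 (I.freeFO_domain 0)).subset.trans (Set.empty_subset _)) ih

theorem freeSO_translate_subset (φ : GMSO Vl El) : (I.translate φ).freeSO ⊆ φ.freeSO := by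
  induction φ with
  | lab a x => exact (I.freeSO_lab a x).subset
  | edge γ x y => exact (I.freeSO_edge γ x y).subset
  | eq x y => exact subset_rfl
  | mem x X => exact subset_rfl
  | or _ _ ihφ ihψ => exact Set.union_subset_union ihφ ihψ
  | not _ ih => exact ih
  | exFO x _ ih =>
    simp only [translate, freeSO, freeSO_and, I.freeSO_domain, Set.empty_union]
    exact ih
  | exSO X _ ih =>
    simp only [translate, freeSO, freeSO_and, freeSO_allFO, freeSO_imp, I.freeSO_domain,
      Set.union_empty, Set.union_sdiff_distrib, Set.sdiff_self, Set.empty_union]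
    exact Set.sdiff_subset_sdiff_left ih

theorem closed_translate {φ : GMSO Vl El} (hφ : φ.Closed) : (I.translate φ).Closed :=
  ⟨Set.subset_eq_empty (I.freeFO_translate_subset φ) hφ.1,
    Set.subset_eq_empty (I.freeSO_translate_subset φ) hφ.2⟩

/-- The formulas of `I`, evaluated in `N`, define the structure `M` on a subset of the domain of
`N`. -/
structure Interprets (N : LabeledGraph Vl' El' V) (M : LabeledGraph Vl El V) : Prop where
  dom_subset : M.dom ⊆ N.dom
  domain : N.DefinesSetOn N.dom I.domain M.dom
  lab : ∀ a, N.DefinesSetOn M.dom (I.lab a) {v | M.lab v a}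
  edge : ∀ γ, N.DefinesRelOn M.dom (I.edge γ) (M.edge γ)

variable {I} {N : LabeledGraph Vl' El' V} {M : LabeledGraph Vl El V}

theorem Interprets.sat_subset_guard_iff (h : I.Interprets N M) {ν : ℕ → Option V} {μ : ℕ → Set V}
    {X : ℕ} {E : Set V} (hE : E ⊆ N.dom) :
    N.Sat ν (Function.update μ X E) (allFO 0 ((GMSO.mem 0 X).imp (I.domain 0))) ↔ E ⊆ M.dom := by
  have guard_at : ∀ v ∈ N.dom, N.Sat (Function.update ν 0 (some v)) (Function.update μ X E)
      ((GMSO.mem 0 X).imp (I.domain 0)) ↔ (v ∈ E → v ∈ M.dom) := fun v hv => by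
    have hv0 : Function.update ν 0 (some v) 0 = some v := Function.update_self ..
    rw [sat_imp, sat_mem_iff hv0, h.domain hv hv0, Function.update_self]
  rw [sat_allFO]
  exact ⟨fun hsat v hv => (guard_at v (hE hv)).1 (hsat v (hE hv)) hv,
    fun hsub v hv => (guard_at v hv).2 fun hvE => hsub hvE⟩

theorem exists_update_eq_some {D : Set V} {F : Set ℕ} {ν : ℕ → Option V} {x : ℕ} {v : V}
    (hν : ∀ y ∈ F \ {x}, ∃ w ∈ D, ν y = some w) (hv : v ∈ D) :
    ∀ y ∈ F, ∃ w ∈ D, Function.update ν x (some v) y = some w := by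
  intro y hy
  obtain rfl | hyx := eq_or_ne y x
  · exact ⟨v, hv, Function.update_self ..⟩
  · rw [Function.update_of_ne hyx]
    exact hν y ⟨hy, hyx⟩

theorem Interprets.sat_translate_iff (h : I.Interprets N M) (φ : GMSO Vl El)
    {ν : ℕ → Option V} {μ : ℕ → Set V} (hν : ∀ x ∈ φ.freeFO, ∃ v ∈ M.dom, ν x = some v) :
    M.Sat ν μ φ ↔ N.Sat ν μ (I.translate φ) := by
  induction φ generalizing ν μ with
  | lab a x =>
    obtain ⟨v, hv, hx⟩ := hν x rfl
    rw [translate, h.lab a hv hx, sat_lab_iff hx]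
    exact and_iff_right hv
  | edge γ x y =>
    obtain ⟨u, hu, hx⟩ := hν x (.inl rfl)
    obtain ⟨v, hv, hy⟩ := hν y (.inr rfl)
    rw [translate, h.edge γ hu hv hx hy, sat_edge_iff hx hy]
  | eq x y => rfl
  | mem x X => rfl
  | or φ ψ ihφ ihψ =>
    exact or_congr (ihφ fun x hx => hν x (.inl hx)) (ihψ fun x hx => hν x (.inr hx))
  | not φ ih => exact not_congr (ih hν)
  | exFO x φ ih =>
    simp only [translate, sat_exFO, sat_and]
    constructor
    · rintro ⟨v, hv, hsat⟩
      have hvN := h.dom_subset hv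
      exact ⟨v, hvN, (h.domain hvN (Function.update_self ..)).2 hv,
        (ih (exists_update_eq_some hν hv)).1 hsat⟩
    · rintro ⟨v, hvN, hguard, hsat⟩
      have hv := (h.domain hvN (Function.update_self ..)).1 hguard
      exact ⟨v, hv, (ih (exists_update_eq_some hν hv)).2 hsat⟩
  | exSO X φ ih =>
    simp only [translate, sat_exSO, sat_and]
    constructor
    · rintro ⟨E, hE, hsat⟩
      have hEN := hE.trans h.dom_subset
      exact ⟨E, hEN, (h.sat_subset_guard_iff hEN).2 hE, (ih hν).1 hsat⟩
    · rintro ⟨E, hEN, hguard, hsat⟩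
      exact ⟨E, (h.sat_subset_guard_iff hEN).1 hguard, (ih hν).2 hsat⟩

theorem Interprets.models_translate_iff (h : I.Interprets N M) {φ : GMSO Vl El} (hφ : φ.Closed) :
    Models M.dom M.lab M.edge φ ↔ Models N.dom N.lab N.edge (I.translate φ) :=
  h.sat_translate_iff φ fun x hx => absurd hx (hφ.1 ▸ Set.notMem_empty x)

end MSOInterpretation

namespace BTree

variable {Λ : Type} {t : BTree Λ} {p q u v : List Bool}

/-- The tree as a structure for `GMSO`, with the two child relations as its edges. -/
def toLabeledGraph (t : BTree Λ) : LabeledGraph Λ Bool (List Bool) where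
  dom := t.positions
  lab p l := t.labelAt p = some l
  edge := t.childRel

theorem mem_positions_of_prefix (h : p <+: q) (hq : q ∈ t.positions) : p ∈ t.positions := by
  obtain ⟨s, rfl⟩ := h
  induction p generalizing t with
  | nil => cases t <;> rfl
  | cons b p ih =>
    cases t <;> cases b
    case unary.false t => exact ih (t := t) hq
    case binary.false t₁ _ => exact ih (t := t₁) hq
    case binary.true _ t₂ => exact ih (t := t₂) hq
    all_goals exact absurd hq Bool.false_ne_true

theorem left_mem_positions_of_childRel {b : Bool} (h : t.childRel b p q) : p ∈ t.positions :=
  mem_positions_of_prefix (h.1 ▸ List.prefix_append p [b]) h.2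

/-- Sets of nodes closed under taking children; they are used to define the tree order in MSO. -/
def ChildClosed (t : BTree Λ) (E : Set (List Bool)) : Prop :=
  ∀ b p q, t.childRel b p q → p ∈ E → q ∈ E

theorem prefix_iff_forall_childClosed (hp : p ∈ t.positions) (hu : u ∈ t.positions) :
    p <+: u ↔ ∀ E ⊆ t.positions, p ∈ E → t.ChildClosed E → u ∈ E := by
  constructor
  · rintro ⟨s, rfl⟩ E _ hpE hE
    induction s using List.reverseRecOn with
    | nil => simpa only [List.append_nil] using hpE
    | append_singleton s b ih =>
      rw [← List.append_assoc] at hu ⊢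
      exact hE b (p ++ s) _ ⟨rfl, hu⟩ (ih (mem_positions_of_prefix (List.prefix_append ..) hu))
  · intro h
    have closed : t.ChildClosed {q | q ∈ t.positions ∧ p <+: q} := by
      rintro b q _ ⟨rfl, hqb⟩ ⟨_, hpq⟩
      exact ⟨hqb, hpq.trans (List.prefix_append q [b])⟩
    exact (h {q | q ∈ t.positions ∧ p <+: q} (fun _ hq => hq.1) ⟨hp, List.prefix_rfl⟩ closed).2

/-- The positions `u` and `v` lie below different children of `p`, that is, `p` is their lowest
common ancestor and differs from both. -/
def ForksAt (p u v : List Bool) : Prop := ∃ b, p ++ [b] <+: u ∧ p ++ [!b] <+: v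

theorem forksAt_cons_self_iff {c : Bool} :
    ForksAt p (c :: u) (c :: v) ↔ ∃ q, p = c :: q ∧ ForksAt q u v := by
  cases p <;> grind [ForksAt]

theorem forksAt_cons_iff_of_ne {c d : Bool} (hcd : c ≠ d) :
    ForksAt p (c :: u) (d :: v) ↔ p = [] := by
  obtain rfl := Bool.eq_not_of_ne hcd.symm
  cases p <;> grind [ForksAt]

/-- Some node labeled `l` is the fork of `u` and `v`. -/
def ForksAtLabel (t : BTree Λ) (l : Λ) (u v : List Bool) : Prop :=
  ∃ p, t.labelAt p = some l ∧ ForksAt p u v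

section Binary

variable {k l : Λ} {t₁ t₂ : BTree Λ}

theorem forksAtLabel_binary_false_false :
    (binary l t₁ t₂).ForksAtLabel k (false :: u) (false :: v) ↔ t₁.ForksAtLabel k u v := by
  simp [ForksAtLabel, forksAt_cons_self_iff, labelAt]

theorem forksAtLabel_binary_true_true :
    (binary l t₁ t₂).ForksAtLabel k (true :: u) (true :: v) ↔ t₂.ForksAtLabel k u v := by
  simp [ForksAtLabel, forksAt_cons_self_iff, labelAt]

theorem forksAtLabel_binary_iff_of_ne {c d : Bool} (hcd : c ≠ d) :
    (binary l t₁ t₂).ForksAtLabel k (c :: u) (d :: v) ↔ l = k := by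
  simp [ForksAtLabel, forksAt_cons_iff_of_ne hcd, labelAt]

end Binary

end BTree

namespace GMSO

open LabeledGraph

variable {Λ : Type}

/-- The set `X` is closed under taking children. -/
def childClosed (X : ℕ) : GMSO Λ Bool :=
  allFO 0 (allFO 1 (((GMSO.edge false 0 1).or (.edge true 0 1)).imp
    ((GMSO.mem 0 X).imp (.mem 1 X))))

/-- The node `x` is in the subtree rooted at `p`. -/
def inSubtree (p x : ℕ) : GMSO Λ Bool :=
  allSO 0 ((GMSO.mem p 0).imp ((childClosed 0).imp (.mem x 0)))

/-- The node `x` is in the subtree rooted at the `b`-child of `p`. The index `p + x + 1` of the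
bound variable is chosen to differ from `p` and `x`. -/
def inChildSubtree (b : Bool) (p x : ℕ) : GMSO Λ Bool :=
  .exFO (p + x + 1) ((GMSO.edge b p (p + x + 1)).and (inSubtree (p + x + 1) x))

/-- The nodes `x` and `y` are below different children of a node labeled `l`. The index `x + y + 1`
of the bound variable is chosen to differ from `x` and `y`. -/
def forksAtLabel (l : Λ) (x y : ℕ) : GMSO Λ Bool :=
  .exFO (x + y + 1) ((GMSO.lab l (x + y + 1)).and
    (((inChildSubtree false (x + y + 1) x).and (inChildSubtree true (x + y + 1) y)).or
      ((inChildSubtree true (x + y + 1) x).and (inChildSubtree false (x + y + 1) y))))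

theorem freeFO_forksAtLabel_subset (l : Λ) (x y : ℕ) : (forksAtLabel l x y).freeFO ⊆ {x, y} := by
  intro n
  simp only [forksAtLabel, inChildSubtree, inSubtree, childClosed, freeFO, freeFO_and, freeFO_imp,
    freeFO_allFO, freeFO_allSO, Set.mem_union, Set.mem_sdiff, Set.mem_insert_iff,
    Set.mem_singleton_iff]
  omega

theorem freeSO_forksAtLabel (l : Λ) (x y : ℕ) : (forksAtLabel l x y).freeSO = ∅ := by
  simp [forksAtLabel, inChildSubtree, inSubtree, childClosed, freeSO, freeSO_and, freeSO_imp,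
    freeSO_allFO, freeSO_allSO]

variable {t : BTree Λ}

theorem sat_childClosed_iff {ν : ℕ → Option (List Bool)} {μ : ℕ → Set (List Bool)} {X : ℕ} :
    t.toLabeledGraph.Sat ν μ (childClosed X) ↔ t.ChildClosed (μ X) := by
  have closed_at (p q : List Bool) :
      t.toLabeledGraph.Sat (Function.update (Function.update ν 0 (some p)) 1 (some q)) μ
        (((GMSO.edge false 0 1).or (.edge true 0 1)).imp ((GMSO.mem 0 X).imp (.mem 1 X))) ↔
      (t.childRel false p q ∨ t.childRel true p q → p ∈ μ X → q ∈ μ X) := by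
    set ν' := Function.update (Function.update ν 0 (some p)) 1 (some q)
    have hp : ν' 0 = some p := rfl
    have hq : ν' 1 = some q := rfl
    rw [sat_imp, sat_or, sat_edge_iff hp hq, sat_edge_iff hp hq, sat_imp, sat_mem_iff hp,
      sat_mem_iff hq]
    rfl
  simp only [childClosed, sat_allFO, closed_at]
  constructor
  · intro h b p q hpq
    exact h p (BTree.left_mem_positions_of_childRel hpq) q hpq.2 (by cases b <;> simp [hpq])
  · rintro h p - q - (hpq | hpq)
    exacts [h false p q hpq, h true p q hpq]

theorem definesRelOn_inSubtree :
    t.toLabeledGraph.DefinesRelOn t.positions inSubtree (· <+: ·) := by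
  intro ν μ x y p u hp hu hx hy
  simp only [inSubtree, sat_allSO, sat_imp, sat_mem_iff hx, sat_mem_iff hy, sat_childClosed_iff,
    Function.update_self]
  exact (BTree.prefix_iff_forall_childClosed hp hu).symm

theorem definesRelOn_inChildSubtree (b : Bool) :
    t.toLabeledGraph.DefinesRelOn t.positions (inChildSubtree b) (fun p u => p ++ [b] <+: u) := by
  intro ν μ x y p u _ hu hx hy
  have body_iff : ∀ q ∈ t.positions,
      t.toLabeledGraph.Sat (Function.update ν (x + y + 1) (some q)) μ
        ((GMSO.edge b x (x + y + 1)).and (inSubtree (x + y + 1) y)) ↔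
      t.childRel b p q ∧ q <+: u := by
    intro q hq
    set ν' := Function.update ν (x + y + 1) (some q)
    have hx' : ν' x = some p := (Function.update_of_ne (by omega) ..).trans hx
    have hy' : ν' y = some u := (Function.update_of_ne (by omega) ..).trans hy
    have hq' : ν' (x + y + 1) = some q := Function.update_self ..
    rw [sat_and, sat_edge_iff hx' hq', definesRelOn_inSubtree hq hu hq' hy']
    rfl
  rw [inChildSubtree, sat_exFO]
  constructor
  · rintro ⟨q, hq, hsat⟩
    obtain ⟨⟨rfl, -⟩, hqu⟩ := (body_iff q hq).1 hsat
    exact hqu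
  · intro hpu
    have hpb := BTree.mem_positions_of_prefix hpu hu
    exact ⟨p ++ [b], hpb, (body_iff _ hpb).2 ⟨⟨rfl, hpb⟩, hpu⟩⟩

theorem definesRelOn_forksAtLabel (l : Λ) :
    t.toLabeledGraph.DefinesRelOn t.positions (forksAtLabel l) (t.ForksAtLabel l) := by
  intro ν μ x y u v hu hv hx hy
  have body_iff : ∀ p ∈ t.positions,
      t.toLabeledGraph.Sat (Function.update ν (x + y + 1) (some p)) μ
        ((GMSO.lab l (x + y + 1)).and
          (((inChildSubtree false (x + y + 1) x).and (inChildSubtree true (x + y + 1) y)).or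
            ((inChildSubtree true (x + y + 1) x).and (inChildSubtree false (x + y + 1) y)))) ↔
      t.labelAt p = some l ∧ BTree.ForksAt p u v := by
    intro p hp
    set ν' := Function.update ν (x + y + 1) (some p)
    have hx' : ν' x = some u := (Function.update_of_ne (by omega) ..).trans hx
    have hy' : ν' y = some v := (Function.update_of_ne (by omega) ..).trans hy
    have hp' : ν' (x + y + 1) = some p := Function.update_self ..
    rw [sat_and, sat_lab_iff hp', sat_or, sat_and, sat_and,
      definesRelOn_inChildSubtree _ hp hu hp' hx', definesRelOn_inChildSubtree _ hp hv hp' hy',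
      definesRelOn_inChildSubtree _ hp hu hp' hx', definesRelOn_inChildSubtree _ hp hv hp' hy',
      BTree.ForksAt, Bool.exists_bool]
    exact and_congr_left' (and_iff_right hp)
  rw [forksAtLabel, sat_exFO]
  constructor
  · rintro ⟨p, hp, hsat⟩
    exact ⟨p, (body_iff p hp).1 hsat⟩
  · rintro ⟨p, hl, hfork⟩
    have hp : p ∈ t.positions := Option.isSome_of_eq_some hl
    exact ⟨p, hp, (body_iff p hp).2 ⟨hl, hfork⟩⟩

end GMSO

section Cograph

open BTree GMSO LabeledGraph

variable {Alph : Type} {t t₁ t₂ : BTree (CographLabel Alph)} {u v : List Bool}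

theorem cographVertices_subset_positions : cographVertices t ⊆ t.positions :=
  fun _ ⟨_, ha⟩ => Option.isSome_of_eq_some ha

theorem eq_nil_of_mem_cographVertices_leaf {l : CographLabel Alph}
    (hu : u ∈ cographVertices (.leaf l)) : u = [] := by
  obtain ⟨a, ha⟩ := hu
  cases u with
  | nil => rfl
  | cons => simp [labelAt] at ha

theorem exists_cons_of_mem_cographVertices_binary {l : Bool}
    (hu : u ∈ cographVertices (.binary (.inr l) t₁ t₂)) :
    (∃ u' ∈ cographVertices t₁, u = false :: u') ∨ ∃ u' ∈ cographVertices t₂, u = true :: u' := by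
  obtain ⟨a, ha⟩ := hu
  match u with
  | [] => simp [labelAt] at ha
  | false :: u' => exact .inl ⟨u', ⟨a, ha⟩, rfl⟩
  | true :: u' => exact .inr ⟨u', ⟨a, ha⟩, rfl⟩

theorem cographEdge_iff_forksAtLabel (ht : IsCographTerm t) (hu : u ∈ cographVertices t)
    (hv : v ∈ cographVertices t) : cographEdge t u v ↔ t.ForksAtLabel (.inr true) u v := by
  induction t generalizing u v with
  | leaf l =>
    obtain rfl := eq_nil_of_mem_cographVertices_leaf hu
    simp [cographEdge, ForksAtLabel, ForksAt]
  | unary => exact ht.elim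
  | binary l t₁ t₂ ih₁ ih₂ =>
    obtain a | l := l
    · exact ht.elim
    obtain ⟨u, hu', rfl⟩ | ⟨u, hu', rfl⟩ := exists_cons_of_mem_cographVertices_binary hu <;>
      obtain ⟨v, hv', rfl⟩ | ⟨v, hv', rfl⟩ := exists_cons_of_mem_cographVertices_binary hv
    · rw [forksAtLabel_binary_false_false, ← ih₁ ht.1 hu' hv']
      simp [cographEdge]
    · rw [forksAtLabel_binary_iff_of_ne Bool.false_ne_true]
      simp [cographEdge, hu', hv']
    · rw [forksAtLabel_binary_iff_of_ne Bool.false_ne_true.symm]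
      simp [cographEdge, hu', hv']
    · rw [forksAtLabel_binary_true_true, ← ih₂ ht.2 hu' hv']
      simp [cographEdge]

/-- The cograph denoted by a term, as a structure for `GMSO`. -/
def cographLabeledGraph (t : BTree (CographLabel Alph)) : LabeledGraph Alph Unit (List Bool) where
  dom := cographVertices t
  lab p a := t.labelAt p = some (.inl a)
  edge _ := cographEdge t

/-- The node `x` carries a letter, expressed by excluding the labels `⊕` and `⊗`. -/
def isVertex (x : ℕ) : GMSO (CographLabel Alph) Bool :=
  (GMSO.lab (.inr false) x).not.and (GMSO.lab (.inr true) x).not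

theorem definesSetOn_isVertex :
    t.toLabeledGraph.DefinesSetOn t.positions isVertex (cographVertices t) := by
  intro ν μ x u hu hx
  rw [isVertex, sat_and, sat_not, sat_not, sat_lab_iff hx, sat_lab_iff hx]
  obtain ⟨a | b, hl⟩ := Option.isSome_iff_exists.1 hu
  · simp [toLabeledGraph, cographVertices, hl]
  · cases b <;> simp [toLabeledGraph, cographVertices, hl, hu]

/-- The interpretation of the cograph of a term in the tree of the term. -/
def cographInterpretation (Alph : Type) :
    MSOInterpretation Alph Unit (CographLabel Alph) Bool where
  domain := isVertex
  lab a := .lab (.inl a)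
  edge _ := forksAtLabel (.inr true)
  freeFO_domain x := by simp [isVertex, freeFO, freeFO_and]
  freeSO_domain x := by simp [isVertex, freeSO, freeSO_and]
  freeFO_lab _ _ := subset_rfl
  freeSO_lab _ _ := rfl
  freeFO_edge _ := freeFO_forksAtLabel_subset _
  freeSO_edge _ := freeSO_forksAtLabel _

theorem interprets_cographLabeledGraph (ht : IsCographTerm t) :
    (cographInterpretation Alph).Interprets t.toLabeledGraph (cographLabeledGraph t) where
  dom_subset := cographVertices_subset_positions
  domain := definesSetOn_isVertex
  lab _ _ _ _ _ hu hx :=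
    (sat_lab_iff hx).trans (and_iff_right (cographVertices_subset_positions hu))
  edge _ _ _ _ _ _ _ hu hv hx hy :=
    (definesRelOn_forksAtLabel _ (cographVertices_subset_positions hu)
      (cographVertices_subset_positions hv) hx hy).trans
        (cographEdge_iff_forksAtLabel ht hu hv).symm

end Cograph

theorem cograph_mso_interpretation_general (Alph : Type) (φ : GMSO Alph Unit)
    (hφ : GMSO.Closed φ) :
    ∃ ψ : GMSO (CographLabel Alph) Bool, GMSO.Closed ψ ∧
      ∀ t : BTree (CographLabel Alph), IsCographTerm t →
        (cographSat t φ ↔ BTree.TSat t ψ) :=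
  ⟨(cographInterpretation Alph).translate φ, (cographInterpretation Alph).closed_translate hφ,
    fun _ ht => (interprets_cographLabeledGraph ht).models_translate_iff hφ⟩

/-- For every MSO sentence `φ` over `Alph`-labeled undirected
graphs there is an MSO sentence `φ~` over binary trees labeled by
`Alph ∪ {⊕,⊗}` such that for every cograph term `C`, with `G = ⟦C⟧`:
`G ⊨ φ` iff `C ⊨ φ~`. -/
theorem cograph_mso_interpretation (Alph : Type) [Fintype Alph]
    (φ : GMSO Alph Unit) (hφ : GMSO.Closed φ) :
    ∃ ψ : GMSO (CographLabel Alph) Bool, GMSO.Closed ψ ∧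
      ∀ t : BTree (CographLabel Alph), IsCographTerm t →
        (cographSat t φ ↔ BTree.TSat t ψ) :=
  cograph_mso_interpretation_general Alph φ hφ
end

section
/- For every k ≥ 1 there is a deterministic bottom-up tree automaton A_acyclic^{k-stw} with at most 2^{k+k²} states that accepts a binary tree τ over Λ^k if and only if τ is a valid k-STT and the graph G_τ is acyclic, i.e., the union of all edge relations of G_τ has an irreflexive transitive closure. -/
/-! ### Special tree terms (STTs) and their graph semantics -/

/-- Special tree terms over vertex labels `Vl` and edge labels `El`,
with colors in `ℕ`. -/
inductive STT (Vl El : Type) : Type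
  | atom (i : ℕ) (a : Vl)
  | add (γ : El) (i j : ℕ) (τ : STT Vl El)
  | forget (i : ℕ) (τ : STT Vl El)
  | plus (τ₁ τ₂ : STT Vl El)

namespace STT

variable {Vl El : Type}

/-- The active colors of a term. -/
def activeColors : STT Vl El → Set ℕ
  | .atom i _ => {i}
  | .add _ _ _ τ => τ.activeColors
  | .forget i τ => τ.activeColors \ {i}
  | .plus τ₁ τ₂ => τ₁.activeColors ∪ τ₂.activeColors

/-- Valid `k`-STTs: colors in `[k] = {1,…,k}`, and the two arguments of `⊕`
have disjoint sets of active colors. -/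
def Valid (k : ℕ) : STT Vl El → Prop
  | .atom i _ => 1 ≤ i ∧ i ≤ k
  | .add _ i j τ => 1 ≤ i ∧ i ≤ k ∧ 1 ≤ j ∧ j ≤ k ∧ τ.Valid k
  | .forget i τ => 1 ≤ i ∧ i ≤ k ∧ τ.Valid k
  | .plus τ₁ τ₂ => τ₁.Valid k ∧ τ₂.Valid k ∧ Disjoint τ₁.activeColors τ₂.activeColors

/-- The (partial, injective) coloring `χ_τ`, mapping a color to the position of
the vertex currently carrying it.  Vertices are identified with the positions
of the atoms in the term (`false` = unique/left child, `true` = right child). -/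
def chi : STT Vl El → ℕ → Option (List Bool)
  | .atom i _, j => if j = i then some [] else none
  | .add _ _ _ τ, j => (τ.chi j).map (false :: ·)
  | .forget i τ, j => if j = i then none else (τ.chi j).map (false :: ·)
  | .plus τ₁ τ₂, j =>
      match τ₁.chi j with
      | some p => some (false :: p)
      | none => (τ₂.chi j).map (true :: ·)

/-- The label of a vertex (i.e., of an atom position) of `G_τ`. -/
def vlabel : STT Vl El → List Bool → Option Vl
  | .atom _ a, [] => some a
  | .add _ _ _ τ, false :: p => τ.vlabel p
  | .forget _ τ, false :: p => τ.vlabel p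
  | .plus τ₁ _, false :: p => τ₁.vlabel p
  | .plus _ τ₂, true :: p => τ₂.vlabel p
  | _, _ => none

/-- The vertex set of `G_τ`. -/
def vertices (τ : STT Vl El) : Set (List Bool) := {p | (τ.vlabel p).isSome}

/-- The `γ`-labeled edge relation of `G_τ`. -/
def edgeRel : STT Vl El → El → List Bool → List Bool → Prop
  | .atom _ _, _, _, _ => False
  | .add γ' i j τ, γ, u, v =>
      (∃ u' v', u = false :: u' ∧ v = false :: v' ∧ τ.edgeRel γ u' v') ∨
      (γ = γ' ∧ ∃ pu pv, τ.chi i = some pu ∧ τ.chi j = some pv ∧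
        u = false :: pu ∧ v = false :: pv)
  | .forget _ τ, γ, u, v => ∃ u' v', u = false :: u' ∧ v = false :: v' ∧ τ.edgeRel γ u' v'
  | .plus τ₁ τ₂, γ, u, v =>
      (∃ u' v', u = false :: u' ∧ v = false :: v' ∧ τ₁.edgeRel γ u' v') ∨
      (∃ u' v', u = true :: u' ∧ v = true :: v' ∧ τ₂.edgeRel γ u' v')

/-- `G_τ` is acyclic: the union of all edge relations has an irreflexive
transitive closure. -/
def Acyclic (τ : STT Vl El) : Prop :=
  ∀ p, ¬ Relation.TransGen (fun u v => ∃ γ, τ.edgeRel γ u v) p p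

/-- Satisfaction of a graph-MSO sentence in the graph `G_τ`. -/
def graphSat (τ : STT Vl El) (φ : GMSO Vl El) : Prop :=
  GMSO.Models τ.vertices (fun p a => τ.vlabel p = some a) τ.edgeRel φ

end STT

/-- The label alphabet `Λ^k` of `k`-STTs, seen as labeled binary trees. -/
inductive STTLabel (Vl El : Type) : Type
  | atom (i : ℕ) (a : Vl)
  | add (γ : El) (i j : ℕ)
  | forget (i : ℕ)
  | plus

/-- The binary tree underlying a special tree term. -/
def STT.toTree {Vl El : Type} : STT Vl El → BTree (STTLabel Vl El)
  | .atom i a => .leaf (.atom i a)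
  | .add γ i j τ => .unary (.add γ i j) τ.toTree
  | .forget i τ => .unary (.forget i) τ.toTree
  | .plus τ₁ τ₂ => .binary .plus τ₁.toTree τ₂.toTree
/-! ### Bottom-up tree automata -/

/-- A (nondeterministic) bottom-up tree automaton over `Λ`-labeled trees with
nodes of arity 0, 1 or 2. -/
structure BUTA (Λ : Type) where
  State : Type
  stFintype : Fintype State
  leafT : Λ → State → Prop
  unaryT : Λ → State → State → Prop
  binaryT : Λ → State → State → State → Prop
  accept : State → Prop

namespace BUTA

variable {Λ : Type}

/-- Bottom-up runs: the state assigned at the root of the given tree. -/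
inductive Runs (Aut : BUTA Λ) : BTree Λ → Aut.State → Prop
  | leaf {l s} : Aut.leafT l s → Runs Aut (.leaf l) s
  | unary {l t s' s} : Aut.unaryT l s' s → Runs Aut t s' → Runs Aut (.unary l t) s
  | binary {l t₁ t₂ s₁ s₂ s} : Aut.binaryT l s₁ s₂ s →
      Runs Aut t₁ s₁ → Runs Aut t₂ s₂ → Runs Aut (.binary l t₁ t₂) s

/-- Acceptance: some run reaching an accepting state at the root. -/
def Accepts (Aut : BUTA Λ) (t : BTree Λ) : Prop := ∃ s, Aut.Runs t s ∧ Aut.accept s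

/-- Determinism: the transition relations are partial functions. -/
def Deterministic (Aut : BUTA Λ) : Prop :=
  (∀ l s s', Aut.leafT l s → Aut.leafT l s' → s = s') ∧
  (∀ l s₀ s s', Aut.unaryT l s₀ s → Aut.unaryT l s₀ s' → s = s') ∧
  (∀ l s₁ s₂ s s', Aut.binaryT l s₁ s₂ s → Aut.binaryT l s₁ s₂ s' → s = s')

/-- The number of states. -/
noncomputable def card (Aut : BUTA Λ) : ℕ := @Fintype.card Aut.State Aut.stFintype

end BUTA

/-!
Summarise a colored graph by the set of pairs `(i, j)` of colors such that the `j`-colored vertex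
is reachable from the `i`-colored one. Paths of length zero are allowed, so the diagonal of this set
records which colors are present. The summary of a term can be computed from the summaries of its
arguments: adding an edge `i → j` creates exactly the paths `x ⟶ i → j ⟶ y`, forgetting a color
restricts the summary, and a disjoint union takes the union. Acyclicity can only be lost at
`Add i j`, which closes a cycle iff `(j, i)` is already in the summary. An automaton whose states
are the `2 ^ (k * k)` subsets of `[k] × [k]` thus carries the summary and gets stuck exactly when
the tree is not a valid term or a cycle is created.
-/

section Closures

open Relation

variable {α β γ : Type*}

theorem transGen_map {f : α → β} (hf : f.Injective) (r : α → α → Prop) :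
    TransGen (Relation.Map r f f) = Relation.Map (TransGen r) f f := by
  ext x y
  constructor
  · intro h
    induction h with
    | single h => exact map_mono (fun _ _ => .single) _ _ h
    | tail _ h ih =>
      obtain ⟨a, b, hab, rfl, rfl⟩ := ih
      obtain ⟨b', c, hbc, hb, rfl⟩ := h
      obtain rfl := hf hb
      exact ⟨a, c, hab.tail hbc, rfl, rfl⟩
  · rintro ⟨a, b, h, rfl, rfl⟩
    exact TransGen.lift f (le_onFun_map f) _ _ h

theorem reflTransGen_map_apply_apply {f : α → β} (hf : f.Injective) (r : α → α → Prop) (a b : α) :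
    ReflTransGen (Relation.Map r f f) (f a) (f b) ↔ ReflTransGen r a b := by
  rw [reflTransGen_iff_eq_or_transGen, reflTransGen_iff_eq_or_transGen, hf.eq_iff, transGen_map hf,
    map_apply_apply hf hf]

theorem transGen_sup_eq_of_not_comp {r s : α → α → Prop} (hrs : ∀ a b c, r a b → ¬ s b c)
    (hsr : ∀ a b c, s a b → ¬ r b c) : TransGen (r ⊔ s) = TransGen r ⊔ TransGen s := by
  refine le_antisymm (fun x y h => ?_) (sup_le (TransGen.mono le_sup_left)
    (TransGen.mono le_sup_right))
  induction h with
  | single h => exact h.imp .single .single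
  | tail _ hbc ih =>
    rcases ih, hbc with ⟨hab | hab, hbc | hbc⟩
    · exact .inl (hab.tail hbc)
    · obtain ⟨_, _, hb⟩ := TransGen.tail'_iff.1 hab
      exact (hrs _ _ _ hb hbc).elim
    · obtain ⟨_, _, hb⟩ := TransGen.tail'_iff.1 hab
      exact (hsr _ _ _ hb hbc).elim
    · exact .inr (hab.tail hbc)

theorem transGen_map_sup_map {f : α → γ} {g : β → γ} (hf : f.Injective) (hg : g.Injective)
    (hfg : ∀ a b, f a ≠ g b) (r : α → α → Prop) (s : β → β → Prop) :
    TransGen (Relation.Map r f f ⊔ Relation.Map s g g) =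
      Relation.Map (TransGen r) f f ⊔ Relation.Map (TransGen s) g g := by
  rw [transGen_sup_eq_of_not_comp, transGen_map hf, transGen_map hg]
  · rintro _ _ _ ⟨_, b, _, _, rfl⟩ ⟨b', _, _, hb, _⟩
    exact hfg b b' hb.symm
  · rintro _ _ _ ⟨_, b, _, _, rfl⟩ ⟨b', _, _, hb, _⟩
    exact hfg b' b hb

theorem reflTransGen_map_sup_map_apply_left {f : α → γ} {g : β → γ} (hf : f.Injective)
    (hg : g.Injective) (hfg : ∀ a b, f a ≠ g b) (r : α → α → Prop) (s : β → β → Prop) (a : α)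
    (c : γ) :
    ReflTransGen (Relation.Map r f f ⊔ Relation.Map s g g) (f a) c ↔
      ∃ b, ReflTransGen r a b ∧ f b = c := by
  simp only [reflTransGen_iff_eq_or_transGen, transGen_map_sup_map hf hg hfg]
  constructor
  · rintro (rfl | ⟨a', b, h, ha, rfl⟩ | ⟨b, _, _, hb, _⟩)
    · exact ⟨a, .inl rfl, rfl⟩
    · obtain rfl := hf ha
      exact ⟨b, .inr h, rfl⟩
    · exact (hfg a b hb.symm).elim
  · rintro ⟨b, rfl | h, rfl⟩
    · exact .inl rfl
    · exact .inr (.inl ⟨a, b, h, rfl, rfl⟩)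

theorem transGen_sup_biclique_iff (r : α → α → Prop) (P Q : α → Prop) (u v : α) :
    TransGen (r ⊔ fun a b => P a ∧ Q b) u v ↔
      TransGen r u v ∨ (∃ a, P a ∧ ReflTransGen r u a) ∧ ∃ b, Q b ∧ ReflTransGen r b v := by
  constructor
  · intro h
    induction h with
    | single h => exact h.imp .single fun ⟨hP, hQ⟩ => ⟨⟨_, hP, .refl⟩, _, hQ, .refl⟩
    | @tail w v _ h ih =>
      rcases ih, h with ⟨huw | ⟨hu, b, hb, hbw⟩, hwv | ⟨hP, hQ⟩⟩
      · exact .inl (huw.tail hwv)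
      · exact .inr ⟨⟨w, hP, huw.to_reflTransGen⟩, v, hQ, .refl⟩
      · exact .inr ⟨hu, b, hb, hbw.tail hwv⟩
      · exact .inr ⟨hu, v, hQ, .refl⟩
  · rintro (h | ⟨⟨a, ha, hua⟩, b, hb, hbv⟩)
    · exact TransGen.mono le_sup_left _ _ h
    · have hav := TransGen.head' (r := r ⊔ fun a b => P a ∧ Q b) (.inr ⟨ha, hb⟩)
        (ReflTransGen.mono le_sup_left _ _ hbv)
      exact hav.trans_right (ReflTransGen.mono le_sup_left _ _ hua)

theorem reflTransGen_sup_biclique_iff (r : α → α → Prop) (P Q : α → Prop) (u v : α) :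
    ReflTransGen (r ⊔ fun a b => P a ∧ Q b) u v ↔
      ReflTransGen r u v ∨ (∃ a, P a ∧ ReflTransGen r u a) ∧ ∃ b, Q b ∧ ReflTransGen r b v := by
  rw [reflTransGen_iff_eq_or_transGen, transGen_sup_biclique_iff, ← or_assoc,
    ← reflTransGen_iff_eq_or_transGen]

end Closures

section AcyclicRel

open Relation

variable {α β γ : Type*}

/-- Acyclicity of the digraph with edge relation `r`; `STT.Acyclic` is the case of the union of the
edge relations of a term. -/
def AcyclicRel (r : α → α → Prop) : Prop := ∀ a, ¬ TransGen r a a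

theorem acyclicRel_bot : AcyclicRel (⊥ : α → α → Prop) := fun _ h =>
  (TransGen.head'_iff.1 h).elim fun _ hb => hb.1

theorem acyclicRel_map_iff {f : α → β} (hf : f.Injective) {r : α → α → Prop} :
    AcyclicRel (Relation.Map r f f) ↔ AcyclicRel r := by
  rw [AcyclicRel, transGen_map hf]
  constructor
  · exact fun h a ha => h (f a) ⟨a, a, ha, rfl, rfl⟩
  · rintro h _ ⟨a, b, hab, rfl, hb⟩
    exact h a (hf hb ▸ hab)

theorem acyclicRel_map_sup_map_iff {f : α → γ} {g : β → γ} (hf : f.Injective) (hg : g.Injective)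
    (hfg : ∀ a b, f a ≠ g b) {r : α → α → Prop} {s : β → β → Prop} :
    AcyclicRel (Relation.Map r f f ⊔ Relation.Map s g g) ↔ AcyclicRel r ∧ AcyclicRel s := by
  rw [← acyclicRel_map_iff hf, ← acyclicRel_map_iff hg]
  simp only [AcyclicRel, transGen_map_sup_map hf hg hfg, transGen_map hf, transGen_map hg,
    ← forall_and]
  exact forall_congr' fun _ => not_or

theorem acyclicRel_sup_biclique_iff {r : α → α → Prop} {P Q : α → Prop} :
    AcyclicRel (r ⊔ fun a b => P a ∧ Q b) ↔
      AcyclicRel r ∧ ∀ b a, Q b → P a → ¬ ReflTransGen r b a := by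
  simp only [AcyclicRel, transGen_sup_biclique_iff, not_or, forall_and, and_congr_right_iff]
  intro _
  constructor
  · exact fun h b a hb ha hba => h a ⟨⟨a, ha, .refl⟩, b, hb, hba⟩
  · rintro h c ⟨⟨a, ha, hca⟩, b, hb, hbc⟩
    exact h b a hb ha (hbc.trans hca)

end AcyclicRel

section ColorReach

open Relation

variable {C U V W : Type*}

/-- The reachability summary of the digraph `r` partially colored by `χ`: the pairs of colors whose
vertices are joined by a directed path, possibly of length zero. -/
def colorReach (χ : C → Option V) (r : V → V → Prop) : Set (C × C) :=
  {x | ∃ p q, χ x.1 = some p ∧ χ x.2 = some q ∧ ReflTransGen r p q}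

theorem mk_mem_colorReach {χ : C → Option V} {r : V → V → Prop} {i j : C} :
    (i, j) ∈ colorReach χ r ↔ ∃ p q, χ i = some p ∧ χ j = some q ∧ ReflTransGen r p q :=
  Iff.rfl

theorem mk_self_mem_colorReach {χ : C → Option V} {r : V → V → Prop} {i : C} :
    (i, i) ∈ colorReach χ r ↔ (χ i).isSome := by
  rw [Option.isSome_iff_exists, mk_mem_colorReach]
  exact ⟨fun ⟨p, _, hp, _⟩ => ⟨p, hp⟩, fun ⟨p, hp⟩ => ⟨p, p, hp, hp, .refl⟩⟩

theorem colorReach_map {f : V → W} (hf : f.Injective) (χ : C → Option V) (r : V → V → Prop) :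
    colorReach (fun c => (χ c).map f) (Relation.Map r f f) = colorReach χ r := by
  ext ⟨i, j⟩
  simp only [mk_mem_colorReach, Option.map_eq_some_iff]
  constructor
  · rintro ⟨_, _, ⟨p, hp, rfl⟩, ⟨q, hq, rfl⟩, h⟩
    exact ⟨p, q, hp, hq, (reflTransGen_map_apply_apply hf r p q).1 h⟩
  · rintro ⟨p, q, hp, hq, h⟩
    exact ⟨f p, f q, ⟨p, hp, rfl⟩, ⟨q, hq, rfl⟩, (reflTransGen_map_apply_apply hf r p q).2 h⟩

theorem colorReach_forget [DecidableEq C] (χ : C → Option V) (r : V → V → Prop) (c : C) :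
    colorReach (fun i => if i = c then none else χ i) r =
      {x ∈ colorReach χ r | x.1 ≠ c ∧ x.2 ≠ c} := by
  ext ⟨i, j⟩
  simp only [Set.mem_sep_iff, mk_mem_colorReach, Option.ite_none_left_eq_some]
  tauto

/-- The digraph with a single edge, from the `i`-colored to the `j`-colored vertex; it has no edge
if one of the two colors is absent. -/
def colorEdge (χ : C → Option V) (i j : C) (u v : V) : Prop :=
  χ i = some u ∧ χ j = some v

theorem colorReach_sup_colorEdge (χ : C → Option V) (r : V → V → Prop) (i j : C) :
    colorReach χ (r ⊔ colorEdge χ i j) =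
      colorReach χ r ∪ {x | (x.1, i) ∈ colorReach χ r ∧ (j, x.2) ∈ colorReach χ r} := by
  ext ⟨x, y⟩
  simp only [Set.mem_union, Set.mem_ofPred_eq, mk_mem_colorReach]
  constructor
  · rintro ⟨p, q, hp, hq, h⟩
    rcases (reflTransGen_sup_biclique_iff r _ _ p q).1 h with h | ⟨⟨a, ha, hpa⟩, b, hb, hbq⟩
    · exact .inl ⟨p, q, hp, hq, h⟩
    · exact .inr ⟨⟨p, a, hp, ha, hpa⟩, b, q, hb, hq, hbq⟩
  · rintro (⟨p, q, hp, hq, h⟩ | ⟨⟨p, a, hp, ha, hpa⟩, b, q, hb, hq, hbq⟩)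
    · exact ⟨p, q, hp, hq, (reflTransGen_sup_biclique_iff r _ _ p q).2 (.inl h)⟩
    · exact ⟨p, q, hp, hq,
        (reflTransGen_sup_biclique_iff r _ _ p q).2 (.inr ⟨⟨a, ha, hpa⟩, b, hb, hbq⟩)⟩

theorem acyclicRel_sup_colorEdge_iff {χ : C → Option V} {r : V → V → Prop} {i j : C} :
    AcyclicRel (r ⊔ colorEdge χ i j) ↔ AcyclicRel r ∧ (j, i) ∉ colorReach χ r := by
  refine acyclicRel_sup_biclique_iff.trans (and_congr_right fun _ => ?_)
  exact ⟨fun h ⟨b, a, hb, ha, hba⟩ => h b a hb ha hba,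
    fun h b a hb ha hba => h ⟨b, a, hb, ha, hba⟩⟩

theorem colorReach_map_sup_map {f : U → W} {g : V → W} (hf : f.Injective) (hg : g.Injective)
    (hfg : ∀ a b, f a ≠ g b) {χ : C → Option W} {χ₁ : C → Option U} {χ₂ : C → Option V}
    (hχ : ∀ c w, χ c = some w ↔ (∃ u, χ₁ c = some u ∧ f u = w) ∨ ∃ v, χ₂ c = some v ∧ g v = w)
    (r : U → U → Prop) (s : V → V → Prop) :
    colorReach χ (Relation.Map r f f ⊔ Relation.Map s g g) =
      colorReach χ₁ r ∪ colorReach χ₂ s := by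
  have reach_f := reflTransGen_map_sup_map_apply_left hf hg hfg r s
  have reach_g := reflTransGen_map_sup_map_apply_left hg hf (fun b a => (hfg a b).symm) s r
  rw [sup_comm] at reach_g
  ext ⟨i, j⟩
  simp only [Set.mem_union, mk_mem_colorReach, hχ]
  constructor
  · rintro ⟨_, _, ⟨p, hp, rfl⟩ | ⟨p, hp, rfl⟩, hq, h⟩
    · obtain ⟨q, hpq, rfl⟩ := (reach_f p _).1 h
      rcases hq with ⟨q', hq, h⟩ | ⟨q', _, h⟩
      · exact .inl ⟨p, q, hp, hf h ▸ hq, hpq⟩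
      · exact (hfg q q' h.symm).elim
    · obtain ⟨q, hpq, rfl⟩ := (reach_g p _).1 h
      rcases hq with ⟨q', _, h⟩ | ⟨q', hq, h⟩
      · exact (hfg q' q h).elim
      · exact .inr ⟨p, q, hp, hg h ▸ hq, hpq⟩
  · rintro (⟨p, q, hp, hq, h⟩ | ⟨p, q, hp, hq, h⟩)
    · exact ⟨f p, f q, .inl ⟨p, hp, rfl⟩, .inl ⟨q, hq, rfl⟩, (reach_f p _).2 ⟨q, h, rfl⟩⟩
    · exact ⟨g p, g q, .inr ⟨p, hp, rfl⟩, .inr ⟨q, hq, rfl⟩, (reach_g p _).2 ⟨q, h, rfl⟩⟩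

end ColorReach

namespace STT

variable {Vl El : Type}

/-- The union of all edge relations of `G_τ`. -/
def Adj (τ : STT Vl El) (u v : List Bool) : Prop := ∃ γ, τ.edgeRel γ u v

/-- The reachability summary of `⟦τ⟧ = (G_τ, χ_τ)`, which is the state the automaton reaches
on `τ`. -/
def summary (τ : STT Vl El) : Set (ℕ × ℕ) := colorReach τ.chi τ.Adj

theorem acyclic_iff_acyclicRel_adj {τ : STT Vl El} : τ.Acyclic ↔ AcyclicRel τ.Adj := Iff.rfl

theorem cons_false_ne_cons_true (p q : List Bool) : false :: p ≠ true :: q := by simp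

theorem mem_activeColors_iff_isSome_chi {τ : STT Vl El} {i : ℕ} :
    i ∈ τ.activeColors ↔ (τ.chi i).isSome := by
  induction τ with
  | atom j a => simp [activeColors, chi]
  | add γ a b τ ih => simp [activeColors, chi, ih]
  | forget j τ ih => by_cases h : i = j <;> simp [activeColors, chi, ih, h]
  | plus τ₁ τ₂ ih₁ ih₂ =>
    simp only [activeColors, chi, Set.mem_union, ih₁, ih₂]
    cases τ₁.chi i <;> simp

theorem activeColors_eq_diag_summary (τ : STT Vl El) :
    τ.activeColors = {i | (i, i) ∈ τ.summary} :=
  Set.ext fun _ => mem_activeColors_iff_isSome_chi.trans mk_self_mem_colorReach.symm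

theorem Valid.activeColors_subset {k : ℕ} {τ : STT Vl El} (hτ : τ.Valid k) :
    τ.activeColors ⊆ Set.Icc 1 k := by
  induction τ with
  | atom i a => exact Set.singleton_subset_iff.2 hτ
  | add γ i j τ ih => exact ih hτ.2.2.2.2
  | forget i τ ih => exact Set.sdiff_subset.trans (ih hτ.2.2)
  | plus τ₁ τ₂ ih₁ ih₂ => exact Set.union_subset (ih₁ hτ.1) (ih₂ hτ.2.1)

theorem Valid.summary_subset {k : ℕ} {τ : STT Vl El} (hτ : τ.Valid k) :
    τ.summary ⊆ Set.Icc 1 k ×ˢ Set.Icc 1 k := by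
  rintro ⟨i, j⟩ ⟨p, q, hp, hq, _⟩
  exact ⟨hτ.activeColors_subset (mem_activeColors_iff_isSome_chi.2 (Option.isSome_of_eq_some hp)),
    hτ.activeColors_subset (mem_activeColors_iff_isSome_chi.2 (Option.isSome_of_eq_some hq))⟩

theorem adj_atom (i : ℕ) (a : Vl) : (atom i a : STT Vl El).Adj = ⊥ := by
  ext u v
  exact ⟨fun ⟨_, h⟩ => h, False.elim⟩

theorem adj_add (γ : El) (i j : ℕ) (τ : STT Vl El) :
    (add γ i j τ).Adj =
      Relation.Map (τ.Adj ⊔ colorEdge τ.chi i j) (List.cons false) (List.cons false) := by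
  ext u v
  constructor
  · rintro ⟨γ', ⟨u', v', rfl, rfl, h⟩ | ⟨rfl, u', v', hu, hv, rfl, rfl⟩⟩
    · exact ⟨u', v', .inl ⟨γ', h⟩, rfl, rfl⟩
    · exact ⟨u', v', .inr ⟨hu, hv⟩, rfl, rfl⟩
  · rintro ⟨u', v', ⟨γ', h⟩ | ⟨hu, hv⟩, rfl, rfl⟩
    · exact ⟨γ', .inl ⟨u', v', rfl, rfl, h⟩⟩
    · exact ⟨γ, .inr ⟨rfl, u', v', hu, hv, rfl, rfl⟩⟩

theorem adj_forget (i : ℕ) (τ : STT Vl El) :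
    (forget i τ).Adj = Relation.Map τ.Adj (List.cons false) (List.cons false) := by
  ext u v
  constructor
  · rintro ⟨γ, u', v', rfl, rfl, h⟩
    exact ⟨u', v', ⟨γ, h⟩, rfl, rfl⟩
  · rintro ⟨u', v', ⟨γ, h⟩, rfl, rfl⟩
    exact ⟨γ, u', v', rfl, rfl, h⟩

theorem adj_plus (τ₁ τ₂ : STT Vl El) :
    (plus τ₁ τ₂).Adj =
      Relation.Map τ₁.Adj (List.cons false) (List.cons false) ⊔
        Relation.Map τ₂.Adj (List.cons true) (List.cons true) := by
  ext u v
  constructor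
  · rintro ⟨γ, ⟨u', v', rfl, rfl, h⟩ | ⟨u', v', rfl, rfl, h⟩⟩
    · exact .inl ⟨u', v', ⟨γ, h⟩, rfl, rfl⟩
    · exact .inr ⟨u', v', ⟨γ, h⟩, rfl, rfl⟩
  · rintro (⟨u', v', ⟨γ, h⟩, rfl, rfl⟩ | ⟨u', v', ⟨γ, h⟩, rfl, rfl⟩)
    · exact ⟨γ, .inl ⟨u', v', rfl, rfl, h⟩⟩
    · exact ⟨γ, .inr ⟨u', v', rfl, rfl, h⟩⟩

theorem chi_plus_eq_some_iff {τ₁ τ₂ : STT Vl El}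
    (hd : Disjoint τ₁.activeColors τ₂.activeColors) (c : ℕ) (p : List Bool) :
    (plus τ₁ τ₂).chi c = some p ↔
      (∃ q, τ₁.chi c = some q ∧ false :: q = p) ∨ ∃ q, τ₂.chi c = some q ∧ true :: q = p := by
  have hc : c ∈ τ₁.activeColors → c ∉ τ₂.activeColors := fun h => Set.disjoint_left.1 hd h
  rw [mem_activeColors_iff_isSome_chi, mem_activeColors_iff_isSome_chi] at hc
  cases h₁ : τ₁.chi c with
  | none => simp [chi, h₁]
  | some q =>
    have h₂ : τ₂.chi c = none := by simpa [h₁] using hc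
    simp [chi, h₁, h₂]

theorem summary_atom (i : ℕ) (a : Vl) : (atom i a : STT Vl El).summary = {(i, i)} := by
  ext ⟨x, y⟩
  rw [Set.mem_singleton_iff, Prod.mk.injEq]
  constructor
  · rintro ⟨p, q, hp, hq, _⟩
    exact ⟨(Option.ite_none_right_eq_some.1 hp).1, (Option.ite_none_right_eq_some.1 hq).1⟩
  · rintro ⟨rfl, rfl⟩
    exact mk_self_mem_colorReach.2 (by simp [chi])

theorem summary_add (γ : El) (i j : ℕ) (τ : STT Vl El) :
    (add γ i j τ).summary =
      τ.summary ∪ {x | (x.1, i) ∈ τ.summary ∧ (j, x.2) ∈ τ.summary} := by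
  rw [summary, adj_add]
  exact (colorReach_map List.cons_injective _ _).trans (colorReach_sup_colorEdge _ _ i j)

theorem summary_forget (i : ℕ) (τ : STT Vl El) :
    (forget i τ).summary = {x ∈ τ.summary | x.1 ≠ i ∧ x.2 ≠ i} := by
  rw [summary, adj_forget]
  exact (colorReach_forget _ _ i).trans (by rw [colorReach_map List.cons_injective]; rfl)

theorem summary_plus {τ₁ τ₂ : STT Vl El} (hd : Disjoint τ₁.activeColors τ₂.activeColors) :
    (plus τ₁ τ₂).summary = τ₁.summary ∪ τ₂.summary := by
  rw [summary, adj_plus]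
  exact colorReach_map_sup_map List.cons_injective List.cons_injective cons_false_ne_cons_true
    (chi_plus_eq_some_iff hd) _ _

theorem acyclic_atom (i : ℕ) (a : Vl) : (atom i a : STT Vl El).Acyclic := by
  rw [acyclic_iff_acyclicRel_adj, adj_atom]
  exact acyclicRel_bot

theorem acyclic_add_iff {γ : El} {i j : ℕ} {τ : STT Vl El} :
    (add γ i j τ).Acyclic ↔ τ.Acyclic ∧ (j, i) ∉ τ.summary := by
  rw [acyclic_iff_acyclicRel_adj, adj_add, acyclicRel_map_iff List.cons_injective]
  exact acyclicRel_sup_colorEdge_iff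

theorem acyclic_forget_iff {i : ℕ} {τ : STT Vl El} : (forget i τ).Acyclic ↔ τ.Acyclic := by
  rw [acyclic_iff_acyclicRel_adj, adj_forget]
  exact acyclicRel_map_iff List.cons_injective

theorem acyclic_plus_iff {τ₁ τ₂ : STT Vl El} :
    (plus τ₁ τ₂).Acyclic ↔ τ₁.Acyclic ∧ τ₂.Acyclic := by
  rw [acyclic_iff_acyclicRel_adj, adj_plus]
  exact acyclicRel_map_sup_map_iff List.cons_injective List.cons_injective cons_false_ne_cons_true

end STT

namespace BUTA

variable {Vl El : Type} {k : ℕ}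

/-- The automaton computing `STT.summary`. Its states are the relations on the colors `1, …, k`, all
of them accepting: rejection is the absence of a transition, for an ill-formed label, overlapping
active colors, or an added edge that closes a cycle. -/
noncomputable def acyclicity (Vl El : Type) (k : ℕ) : BUTA (STTLabel Vl El) where
  State := 𝒫 (Set.Icc 1 k ×ˢ Set.Icc 1 k)
  stFintype := (Set.toFinite _).powerset.fintype
  leafT
    | .atom i _, s => i ∈ Set.Icc 1 k ∧ s.1 = {(i, i)}
    | _, _ => False
  unaryT
    | .add _ i j, s, s' => (i ∈ Set.Icc 1 k ∧ j ∈ Set.Icc 1 k ∧ (j, i) ∉ s.1) ∧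
        s'.1 = s.1 ∪ {x | (x.1, i) ∈ s.1 ∧ (j, x.2) ∈ s.1}
    | .forget i, s, s' => i ∈ Set.Icc 1 k ∧ s'.1 = {x ∈ s.1 | x.1 ≠ i ∧ x.2 ≠ i}
    | _, _, _ => False
  binaryT
    | .plus, s₁, s₂, s' => Disjoint {i | (i, i) ∈ s₁.1} {i | (i, i) ∈ s₂.1} ∧ s'.1 = s₁.1 ∪ s₂.1
    | _, _, _, _ => False
  accept _ := True

theorem deterministic_acyclicity : (acyclicity Vl El k).Deterministic := by
  refine ⟨fun l s s' h h' => ?_, fun l s₀ s s' h h' => ?_, fun l s₁ s₂ s s' h h' => ?_⟩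
  · cases l with
    | atom i a => exact Subtype.ext (h.2.trans h'.2.symm)
    | _ => exact h.elim
  · cases l with
    | add γ i j => exact Subtype.ext (h.2.trans h'.2.symm)
    | forget i => exact Subtype.ext (h.2.trans h'.2.symm)
    | _ => exact h.elim
  · cases l with
    | plus => exact Subtype.ext (h.2.trans h'.2.symm)
    | _ => exact h.elim

theorem card_acyclicity : (acyclicity Vl El k).card = 2 ^ k ^ 2 := by
  let := (acyclicity Vl El k).stFintype
  calc (acyclicity Vl El k).card = (𝒫 (Set.Icc 1 k ×ˢ Set.Icc 1 k)).ncard :=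
        Nat.card_eq_fintype_card.symm
    _ = 2 ^ k ^ 2 := by
        rw [Set.ncard_powerset _ (Set.toFinite _), Set.ncard_prod, Set.ncard_eq_toFinset_card']
        simp [sq]

theorem runs_acyclicity_summary {τ : STT Vl El} (hτ : τ.Valid k) (hac : τ.Acyclic) :
    (acyclicity Vl El k).Runs τ.toTree ⟨τ.summary, hτ.summary_subset⟩ := by
  induction τ with
  | atom i a => exact .leaf ⟨hτ, STT.summary_atom i a⟩
  | add γ i j τ ih =>
    obtain ⟨hi₁, hik, hj₁, hjk, hτ'⟩ := hτ
    obtain ⟨hac', hji⟩ := STT.acyclic_add_iff.1 hac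
    exact .unary ⟨⟨⟨hi₁, hik⟩, ⟨hj₁, hjk⟩, hji⟩, STT.summary_add γ i j τ⟩ (ih hτ' hac')
  | forget i τ ih =>
    obtain ⟨hi₁, hik, hτ'⟩ := hτ
    exact .unary ⟨⟨hi₁, hik⟩, STT.summary_forget i τ⟩ (ih hτ' (STT.acyclic_forget_iff.1 hac))
  | plus τ₁ τ₂ ih₁ ih₂ =>
    obtain ⟨hτ₁, hτ₂, hd⟩ := hτ
    obtain ⟨hac₁, hac₂⟩ := STT.acyclic_plus_iff.1 hac
    refine .binary ⟨?_, STT.summary_plus hd⟩ (ih₁ hτ₁ hac₁) (ih₂ hτ₂ hac₂)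
    rwa [STT.activeColors_eq_diag_summary, STT.activeColors_eq_diag_summary] at hd

theorem exists_term_of_runs_acyclicity {t : BTree (STTLabel Vl El)}
    {s : (acyclicity Vl El k).State} (h : (acyclicity Vl El k).Runs t s) :
    ∃ τ : STT Vl El, τ.Valid k ∧ t = τ.toTree ∧ τ.Acyclic ∧ s.1 = τ.summary := by
  induction h with
  | @leaf l s h =>
    cases l with
    | atom i a =>
      exact ⟨.atom i a, h.1, rfl, STT.acyclic_atom i a, h.2.trans (STT.summary_atom i a).symm⟩
    | _ => exact h.elim
  | @unary l t s' s h _ ih =>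
    obtain ⟨τ, hτ, rfl, hac, hs'⟩ := ih
    cases l with
    | add γ i j =>
      obtain ⟨⟨⟨hi₁, hik⟩, ⟨hj₁, hjk⟩, hji⟩, hs⟩ := h
      rw [hs'] at hji hs
      exact ⟨.add γ i j τ, ⟨hi₁, hik, hj₁, hjk, hτ⟩, rfl, STT.acyclic_add_iff.2 ⟨hac, hji⟩,
        hs.trans (STT.summary_add γ i j τ).symm⟩
    | forget i =>
      obtain ⟨⟨hi₁, hik⟩, hs⟩ := h
      rw [hs'] at hs
      exact ⟨.forget i τ, ⟨hi₁, hik, hτ⟩, rfl, STT.acyclic_forget_iff.2 hac,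
        hs.trans (STT.summary_forget i τ).symm⟩
    | _ => exact h.elim
  | @binary l t₁ t₂ s₁ s₂ s h _ _ ih₁ ih₂ =>
    obtain ⟨τ₁, hτ₁, rfl, hac₁, hs₁⟩ := ih₁
    obtain ⟨τ₂, hτ₂, rfl, hac₂, hs₂⟩ := ih₂
    cases l with
    | plus =>
      obtain ⟨hd, hs⟩ := h
      rw [hs₁, hs₂, ← STT.activeColors_eq_diag_summary, ← STT.activeColors_eq_diag_summary] at hd
      rw [hs₁, hs₂] at hs
      exact ⟨.plus τ₁ τ₂, ⟨hτ₁, hτ₂, hd⟩, rfl, STT.acyclic_plus_iff.2 ⟨hac₁, hac₂⟩,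
        hs.trans (STT.summary_plus hd).symm⟩
    | _ => exact h.elim

theorem accepts_acyclicity_iff {t : BTree (STTLabel Vl El)} :
    (acyclicity Vl El k).Accepts t ↔
      ∃ τ : STT Vl El, τ.Valid k ∧ t = τ.toTree ∧ τ.Acyclic := by
  constructor
  · rintro ⟨s, hs, _⟩
    obtain ⟨τ, hτ, ht, hac, _⟩ := exists_term_of_runs_acyclicity hs
    exact ⟨τ, hτ, ht, hac⟩
  · rintro ⟨τ, hτ, rfl, hac⟩
    exact ⟨_, runs_acyclicity_summary hτ hac, trivial⟩

end BUTA

theorem stt_acyclicity_automaton_general (Vl El : Type) (k : ℕ) :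
    ∃ Aut : BUTA (STTLabel Vl El), Aut.Deterministic ∧
      Aut.card ≤ 2 ^ k ^ 2 ∧
      ∀ t : BTree (STTLabel Vl El),
        (Aut.Accepts t ↔ ∃ τ : STT Vl El, τ.Valid k ∧ t = τ.toTree ∧ τ.Acyclic) :=
  ⟨BUTA.acyclicity Vl El k, BUTA.deterministic_acyclicity, BUTA.card_acyclicity.le,
    fun _ => BUTA.accepts_acyclicity_iff⟩

/-- For every `k ≥ 1` there is a deterministic bottom-up tree
automaton with at most `2^(k+k²)` states accepting a binary tree over `Λ^k` iff
it is a valid `k`-STT whose graph `G_τ` is acyclic. -/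
theorem stt_acyclicity_automaton (Vl El : Type) [Fintype Vl] [Fintype El]
    (k : ℕ) (hk : 1 ≤ k) :
    ∃ Aut : BUTA (STTLabel Vl El), Aut.Deterministic ∧
      Aut.card ≤ 2 ^ (k + k ^ 2) ∧
      ∀ t : BTree (STTLabel Vl El),
        (Aut.Accepts t ↔ ∃ τ : STT Vl El, τ.Valid k ∧ t = τ.toTree ∧ τ.Acyclic) := by
  obtain ⟨Aut, hdet, hcard, haccepts⟩ := stt_acyclicity_automaton_general Vl El k
  exact ⟨Aut, hdet, hcard.trans (Nat.pow_le_pow_right two_pos le_add_self), haccepts⟩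
end
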